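/- Let r,q,r',q' ≥ 1 with rq > 1 and r'q' > 1, and suppose the Morse count functions coincide: μ_{rq}(i) = μ_{r'q'}(i) for all i ≥ 0, where μ_{rq}(i) := #{ j : i_j = i } for the Morse numbers of σ_{rq}. Then {r,q} = {r',q'} as unordered pairs. -/

import Mathlib

/-- Morse numbers `i_j` of a permutation `σ` of `{1,…,N}` (extended to `ℕ`),
via the recursion `i_1 = 0`,
`i_{j+1} = i_j + (-1)^(j+1) * sign (σ⁻¹(j+1) - σ⁻¹(j))`. -/
def morse (σ : Equiv.Perm ℕ) : ℕ → ℤ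
  | 0 => 0
  | 1 => 0
  | (j+2) => morse σ (j+1) +
      (-1)^(j+2) * Int.sign ((σ.symm (j+2) : ℤ) - (σ.symm (j+1) : ℤ))

/-- Zero numbers `z_{j k}`, recursion in the first index `j`, second index `k` fixed:
`z_{1k} = 0`, `z_{kk} = i_k`, `z_{k+1,k} = min (i_k, i_{k+1})`, and otherwise
`z_{j+1,k} = z_{jk} + ((-1)^(j+1)/2) * (sign (σ⁻¹(j+1) - σ⁻¹(k)) - sign (σ⁻¹(j) - σ⁻¹(k)))`. -/
def zrec (σ : Equiv.Perm ℕ) (k : ℕ) : ℕ → ℤ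
  | 0 => 0
  | 1 => 0
  | (j+2) =>
      if j+2 = k then morse σ k
      else if j+1 = k then min (morse σ k) (morse σ (k+1))
      else zrec σ k (j+1) +
        ((-1)^(j+2) * (Int.sign ((σ.symm (j+2) : ℤ) - (σ.symm k : ℤ))
          - Int.sign ((σ.symm (j+1) : ℤ) - (σ.symm k : ℤ)))) / 2

/-- The zero number `z_{m n}`. -/
def zfun (σ : Equiv.Perm ℕ) (m n : ℕ) : ℤ := zrec σ n m

/-- The connection digraph of a dissipative Morse permutation `σ` of `{1,…,N}`:
an edge `m ⤳ n` iff `i_m = i_n + 1` and no `w` strictly between `m` and `n`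
blocks, i.e. satisfies `z_{mw} = z_{wn} = z_{mn}`. -/
def hasEdge (N : ℕ) (σ : Equiv.Perm ℕ) (m n : ℕ) : Prop :=
  1 ≤ m ∧ m ≤ N ∧ 1 ≤ n ∧ n ≤ N ∧
  morse σ m = morse σ n + 1 ∧
  ¬ ∃ w : ℕ, min m n < w ∧ w < max m n ∧
      zfun σ m w = zfun σ w n ∧ zfun σ w n = zfun σ m n

/-- A dissipative permutation of `{1,…,N}`. -/
def Dissipative (N : ℕ) (σ : Equiv.Perm ℕ) : Prop :=
  Set.BijOn σ (Set.Icc 1 N) (Set.Icc 1 N) ∧ σ 1 = 1 ∧ σ N = N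

/-- The Morse property: all Morse numbers are nonnegative. -/
def MorseProp (N : ℕ) (σ : Equiv.Perm ℕ) : Prop :=
  ∀ j, 1 ≤ j → j ≤ N → 0 ≤ morse σ j

/-- Morse counts `μ(i) = #{j ∈ {1,…,N} : i_j = i}`. -/
def morseCount (N : ℕ) (σ : Equiv.Perm ℕ) (i : ℤ) : ℕ :=
  ((Finset.Icc 1 N).filter (fun j => morse σ j = i)).card

/-- The primitive 3-nose permutation `σ_{rq}` of `{1,…,N}`, `N = 2(r+1)(q+1)-1`,
characterized by its defining relations, extended to a permutation of `ℕ`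
fixing everything outside `{1,…,N}`. -/
def SigmaRQ (r q : ℕ) (σ : Equiv.Perm ℕ) : Prop :=
  (∀ a, a ∉ Set.Icc 1 (2*(r+1)*(q+1) - 1) → σ a = a) ∧
  (∀ j k, j ≤ r → k ≤ q →
    σ (2*((q+1)*j+k)+1) = 2*(j+(r+1)*k)+1) ∧
  (∀ j k, j ≤ r → k ≤ q → ¬(j = 0 ∧ k = 0) →
    σ (2*((q+1)*(r-j)+(q-k)+1)) = 2*(j+(r+1)*k))

/-- Tags `A`, `B` of equilibrium labels `A^j_k`, `B^j_k`. -/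
inductive Tag | A | B
deriving DecidableEq

/-- The axis position (`h_1`-position) of the label `L^j_k` for parameters `(r,q)`. -/
def axisPos (r q : ℕ) : Tag → ℕ → ℕ → ℕ
  | Tag.A, j, k => if Odd j then (q+1)*(j-1)+k+1 else (q+1)*(2*r+1-j)+(q-k)+1
  | Tag.B, j, k => if Odd j then (q+1)*j+(q-k)+1 else (q+1)*(2*r-j)+k+1

/-- The meander position (`h_0`-position) of the label `L^j_k` for parameters `(r,q)`. -/
def meanderPos (r q : ℕ) : Tag → ℕ → ℕ → ℕ
  | Tag.A, j, k => if Odd k then (r+1)*(2*q+1-k)+(2*r+1-j) else (r+1)*k+j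
  | Tag.B, j, k => if Odd k then (r+1)*(2*q+1-k)+j else (r+1)*(k+1)+(r-j)

/-- The suspension `σ̃` of a dissipative permutation `σ` of `{1,…,N}`:
`σ̃(1) = 1`, `σ̃(N+2) = N+2`, and `σ̃(a+1) = N+2 - σ(a)` for `1 ≤ a ≤ N`. -/
def IsSuspension (N : ℕ) (σ σt : Equiv.Perm ℕ) : Prop :=
  σt 1 = 1 ∧ σt (N+2) = N+2 ∧ ∀ a, 1 ≤ a → a ≤ N → σt (a+1) = N+2 - σ a

/-- The label `A^0_0` is the distinguished (formal) vertex `⋆`. -/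
def IsStar (L : Tag) (j k : ℕ) : Prop := L = Tag.A ∧ j = 0 ∧ k = 0

/-- Tag swap `A ↔ B`, used by the reversor. -/
def tagSwap : Tag → Tag
  | Tag.A => Tag.B
  | Tag.B => Tag.A

/-!
Put the odd and the even positions of `σ_{rq}` on the grid of pairs `(j, k)`. Comparing `σ⁻¹` at
two consecutive positions is a lexicographic comparison of `(j, k)` with a reflected pair, and the
resulting signs sum up to a closed form: the Morse number is, up to a constant, twice the smallest
`ℓ¹`-distance from `(j, k)` to four corners of the grid. Adding the distances to two opposite
corners shows that no Morse number exceeds `r + q`, and a central pair attains this value. The Morse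
counts therefore determine both the top index `r + q` and the total number `2 (r + 1) (q + 1) - 1`
of positions, hence the sum and the product of `r` and `q`.
-/

lemma eq_and_eq_or_eq_and_eq_of_add_eq_of_mul_eq {R : Type*} [CommRing R] [NoZeroDivisors R]
    {a b c d : R} (hadd : a + b = c + d) (hmul : a * b = c * d) :
    (a = c ∧ b = d) ∨ (a = d ∧ b = c) := by
  have hroot : (a - c) * (a - d) = 0 := by linear_combination a * hadd - hmul
  rcases mul_eq_zero.1 hroot with h | h
  · exact .inl ⟨sub_eq_zero.1 h, by linear_combination hadd - h⟩
  · exact .inr ⟨sub_eq_zero.1 h, by linear_combination hadd - h⟩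

lemma mul_add_le_mul_add_iff_lex {b j j' k k' : ℕ} (hk : k < b) (hk' : k' < b) :
    b * j + k ≤ b * j' + k' ↔ j < j' ∨ j = j' ∧ k ≤ k' := by
  rcases lt_trichotomy j j' with h | rfl | h
  · have : b * (j + 1) ≤ b * j' := Nat.mul_le_mul_left b h
    rw [mul_add_one] at this
    omega
  · simp
  · have : b * (j' + 1) ≤ b * j := Nat.mul_le_mul_left b h
    rw [mul_add_one] at this
    omega

lemma sign_natCast_sub_natCast {a b : ℕ} (h : a ≠ b) :
    Int.sign ((a : ℤ) - b) = if b < a then 1 else -1 := by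
  split_ifs with hlt
  · exact Int.sign_eq_one_of_pos (by omega)
  · exact Int.sign_eq_neg_one_of_neg (by omega)

lemma exists_grid_index_of_mem_Icc {r q n : ℕ} (hn : n ∈ Finset.Icc 1 (2 * (r + 1) * (q + 1) - 1)) :
    ∃ j k, j ≤ r ∧ k ≤ q ∧
      (n = 2 * (j + (r + 1) * k) + 1 ∨ ¬(j = 0 ∧ k = 0) ∧ n = 2 * (j + (r + 1) * k)) := by
  obtain ⟨hn₁, hnN⟩ := Finset.mem_Icc.1 hn
  have hhalf : n / 2 < (r + 1) * (q + 1) := by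
    rw [mul_assoc] at hnN
    omega
  have hdecomp : n / 2 % (r + 1) + (r + 1) * (n / 2 / (r + 1)) = n / 2 := Nat.mod_add_div _ _
  refine ⟨n / 2 % (r + 1), n / 2 / (r + 1), Nat.lt_succ_iff.1 (Nat.mod_lt _ r.succ_pos),
    Nat.lt_succ_iff.1 (Nat.div_lt_of_lt_mul hhalf), ?_⟩
  rw [hdecomp]
  rcases Nat.even_or_odd' n with ⟨m, rfl | rfl⟩
  · refine .inr ⟨fun ⟨hj, hk⟩ ↦ ?_, by omega⟩
    rw [hj, hk] at hdecomp
    omega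
  · exact .inl (by omega)

lemma two_mul_grid_index_add_one_le {r q j k : ℕ} (hj : j ≤ r) (hk : k ≤ q) :
    2 * (j + (r + 1) * k) + 1 ≤ 2 * (r + 1) * (q + 1) - 1 := by
  have hrow : (r + 1) * k ≤ (r + 1) * q := Nat.mul_le_mul_left _ hk
  have hN : 2 * (r + 1) * (q + 1) = 2 * ((r + 1) * q) + 2 * (r + 1) := by ring
  omega

lemma morse_two_mul_add_one (σ : Equiv.Perm ℕ) {m : ℕ} (hm : m ≠ 0) :
    morse σ (2 * m + 1) =
      morse σ (2 * m) + if σ.symm (2 * m + 1) < σ.symm (2 * m) then 1 else -1 := by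
  obtain ⟨n, rfl⟩ := Nat.exists_eq_add_one_of_ne_zero hm
  have hrec : morse σ (2 * (n + 1) + 1) = morse σ (2 * (n + 1)) + (-1) ^ (2 * (n + 1) + 1) *
      Int.sign ((σ.symm (2 * (n + 1) + 1) : ℤ) - σ.symm (2 * (n + 1))) := rfl
  have hne : σ.symm (2 * (n + 1) + 1) ≠ σ.symm (2 * (n + 1)) := by simp
  rw [hrec, (odd_two_mul_add_one _).neg_one_pow, sign_natCast_sub_natCast hne]
  split_ifs <;> omega

lemma morse_two_mul_add_two (σ : Equiv.Perm ℕ) (m : ℕ) :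
    morse σ (2 * m + 2) =
      morse σ (2 * m + 1) + if σ.symm (2 * m + 1) < σ.symm (2 * m + 2) then 1 else -1 := by
  have hne : σ.symm (2 * m + 2) ≠ σ.symm (2 * m + 1) := by simp
  have heven : Even (2 * m + 2) := ⟨m + 1, by ring⟩
  rw [morse, heven.neg_one_pow, sign_natCast_sub_natCast hne, one_mul]

lemma sum_morseCount_eq {N : ℕ} {σ : Equiv.Perm ℕ} {s : Finset ℤ}
    (hs : ∀ n ∈ Finset.Icc 1 N, morse σ n ∈ s) : ∑ i ∈ s, morseCount N σ i = N := by
  simpa [morseCount] using (Finset.card_eq_sum_card_fiberwise hs).symm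

lemma morseCount_ne_zero_iff {N : ℕ} {σ : Equiv.Perm ℕ} {i : ℤ} :
    morseCount N σ i ≠ 0 ↔ ∃ n ∈ Finset.Icc 1 N, morse σ n = i := by
  rw [morseCount, Finset.card_ne_zero, Finset.filter_nonempty_iff]

/-- The Morse number of `σ_{rq}` at the odd position `2 * (j + (r + 1) * k) + 1`. It is twice the
smallest `ℓ¹`-distance from `(j, k)` to the points `(0, 0)`, `(r, 0)`, `(0, q + 1)`, `(r, q)`. -/
def oddMorse (r q j k : ℤ) : ℤ :=
  2 * min (min (j + k) (r - j + k)) (min (j + (q + 1 - k)) (r - j + (q - k)))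

/-- The Morse number of `σ_{rq}` at the even position `2 * (j + (r + 1) * k)`. It is one less
than twice the smallest `ℓ¹`-distance from `(j, k)` to the points `(0, 0)`, `(r + 1, 0)`,
`(0, q + 1)`, `(r + 1, q)`. -/
def evenMorse (r q j k : ℤ) : ℤ :=
  2 * min (min (j + k) (r + 1 - j + k)) (min (j + (q + 1 - k)) (r + 1 - j + (q - k))) - 1

namespace SigmaRQ

variable {r q j k : ℕ} {σ : Equiv.Perm ℕ}

lemma symm_odd (h : SigmaRQ r q σ) (hj : j ≤ r) (hk : k ≤ q) :
    σ.symm (2 * (j + (r + 1) * k) + 1) = 2 * ((q + 1) * j + k) + 1 := by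
  rw [Equiv.symm_apply_eq, h.2.1 j k hj hk]

lemma symm_even (h : SigmaRQ r q σ) (hj : j ≤ r) (hk : k ≤ q) (h0 : ¬(j = 0 ∧ k = 0)) :
    σ.symm (2 * (j + (r + 1) * k)) = 2 * ((q + 1) * (r - j) + (q - k) + 1) := by
  rw [Equiv.symm_apply_eq, h.2.2 j k hj hk h0]

lemma symm_odd_lt_symm_even_iff (h : SigmaRQ r q σ) (hj : j ≤ r) (hk : k ≤ q) {j' k' : ℕ}
    (hj' : j' ≤ r) (hk' : k' ≤ q) (h0 : ¬(j' = 0 ∧ k' = 0)) :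
    σ.symm (2 * (j + (r + 1) * k) + 1) < σ.symm (2 * (j' + (r + 1) * k')) ↔
      j < r - j' ∨ j = r - j' ∧ k ≤ q - k' := by
  rw [h.symm_odd hj hk, h.symm_even hj' hk' h0,
    ← mul_add_le_mul_add_iff_lex (b := q + 1) (by omega) (by omega)]
  omega

lemma morse_odd_eq_morse_even_add (h : SigmaRQ r q σ) (hj : j ≤ r) (hk : k ≤ q)
    (h0 : ¬(j = 0 ∧ k = 0)) :
    morse σ (2 * (j + (r + 1) * k) + 1) = morse σ (2 * (j + (r + 1) * k)) +
      if j < r - j ∨ j = r - j ∧ k ≤ q - k then 1 else -1 := by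
  have hpos : j + (r + 1) * k ≠ 0 := by simpa using h0
  simp only [morse_two_mul_add_one σ hpos, h.symm_odd_lt_symm_even_iff hj hk hj hk h0]

lemma morse_even_eq_morse_odd_add (h : SigmaRQ r q σ) (hj : j ≤ r) (hk : k ≤ q) {j' k' : ℕ}
    (hj' : j' ≤ r) (hk' : k' ≤ q)
    (hnext : j' + (r + 1) * k' = j + (r + 1) * k + 1) :
    morse σ (2 * (j' + (r + 1) * k')) = morse σ (2 * (j + (r + 1) * k) + 1) +
      if j < r - j' ∨ j = r - j' ∧ k ≤ q - k' then 1 else -1 := by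
  have h0 : ¬(j' = 0 ∧ k' = 0) := by
    rintro ⟨rfl, rfl⟩
    omega
  have hindex : 2 * (j + (r + 1) * k) + 2 = 2 * (j' + (r + 1) * k') := by omega
  simp only [← h.symm_odd_lt_symm_even_iff hj hk hj' hk' h0, ← hindex, morse_two_mul_add_two]

lemma morse_odd_eq_oddMorse_of_evenMorse (h : SigmaRQ r q σ) (hj : j ≤ r) (hk : k ≤ q)
    (h0 : ¬(j = 0 ∧ k = 0)) (heven : morse σ (2 * (j + (r + 1) * k)) = evenMorse r q j k) :
    morse σ (2 * (j + (r + 1) * k) + 1) = oddMorse r q j k := by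
  rw [h.morse_odd_eq_morse_even_add hj hk h0, heven, evenMorse, oddMorse]
  split_ifs <;> omega

lemma morse_even_eq_evenMorse_of_oddMorse (h : SigmaRQ r q σ) (hj : j + 1 ≤ r) (hk : k ≤ q)
    (hodd : morse σ (2 * (j + (r + 1) * k) + 1) = oddMorse r q j k) :
    morse σ (2 * (j + 1 + (r + 1) * k)) = evenMorse r q (j + 1 : ℕ) k := by
  rw [h.morse_even_eq_morse_odd_add (j := j) (by omega) hk hj hk (by omega), hodd, evenMorse,
    oddMorse]
  split_ifs <;> omega

lemma morse_even_row_start_of_oddMorse (h : SigmaRQ r q σ) (hk : k + 1 ≤ q)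
    (hodd : morse σ (2 * (r + (r + 1) * k) + 1) = oddMorse r q r k) :
    morse σ (2 * (0 + (r + 1) * (k + 1))) = evenMorse r q (0 : ℕ) (k + 1 : ℕ) := by
  rw [h.morse_even_eq_morse_odd_add (k := k) le_rfl (by omega) r.zero_le hk (by ring), hodd,
    evenMorse, oddMorse]
  split_ifs <;> omega

lemma morse_odd_of_row_start (h : SigmaRQ r q σ) (hk : k ≤ q)
    (hstart : morse σ (2 * (0 + (r + 1) * k) + 1) = oddMorse r q (0 : ℕ) k) (hj : j ≤ r) :
    morse σ (2 * (j + (r + 1) * k) + 1) = oddMorse r q j k := by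
  induction j with
  | zero => exact hstart
  | succ j ih =>
    exact h.morse_odd_eq_oddMorse_of_evenMorse hj hk (by omega)
      (h.morse_even_eq_evenMorse_of_oddMorse hj hk (ih (by omega)))

theorem morse_odd (h : SigmaRQ r q σ) (hj : j ≤ r) (hk : k ≤ q) :
    morse σ (2 * (j + (r + 1) * k) + 1) = oddMorse r q j k := by
  induction k generalizing j with
  | zero =>
    refine h.morse_odd_of_row_start hk ?_ hj
    simp only [oddMorse, morse, mul_zero, add_zero, zero_add]
    omega
  | succ k ih =>
    exact h.morse_odd_of_row_start hk (h.morse_odd_eq_oddMorse_of_evenMorse r.zero_le hk (by omega)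
      (h.morse_even_row_start_of_oddMorse hk (ih le_rfl (by omega)))) hj

theorem morse_even (h : SigmaRQ r q σ) (hj : j ≤ r) (hk : k ≤ q) (h0 : ¬(j = 0 ∧ k = 0)) :
    morse σ (2 * (j + (r + 1) * k)) = evenMorse r q j k := by
  have hstep := h.morse_odd_eq_morse_even_add hj hk h0
  rw [h.morse_odd hj hk, oddMorse] at hstep
  rw [evenMorse]
  split_ifs at hstep <;> omega

lemma morse_mem_Icc (h : SigmaRQ r q σ) {n : ℕ}
    (hn : n ∈ Finset.Icc 1 (2 * (r + 1) * (q + 1) - 1)) :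
    morse σ n ∈ Finset.Icc (0 : ℤ) (r + q : ℕ) := by
  obtain ⟨j, k, hj, hk, rfl | ⟨h0, rfl⟩⟩ := exists_grid_index_of_mem_Icc hn
  · rw [h.morse_odd hj hk, oddMorse, Finset.mem_Icc]
    omega
  · rw [h.morse_even hj hk h0, evenMorse, Finset.mem_Icc]
    omega

lemma exists_morse_eq_add (h : SigmaRQ r q σ) :
    ∃ n ∈ Finset.Icc 1 (2 * (r + 1) * (q + 1) - 1), morse σ n = (r + q : ℕ) := by
  have hk : (q + 1) / 2 ≤ q := by omega
  rcases Nat.even_or_odd (r + q) with ⟨s, hs⟩ | ⟨s, hs⟩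
  · have hj : r / 2 ≤ r := r.div_le_self 2
    refine ⟨2 * (r / 2 + (r + 1) * ((q + 1) / 2)) + 1,
      Finset.mem_Icc.2 ⟨by omega, two_mul_grid_index_add_one_le hj hk⟩, ?_⟩
    rw [h.morse_odd hj hk, oddMorse]
    omega
  · have hj : (r + 1) / 2 ≤ r := by omega
    have h0 : ¬((r + 1) / 2 = 0 ∧ (q + 1) / 2 = 0) := by omega
    have hpos : (r + 1) / 2 + (r + 1) * ((q + 1) / 2) ≠ 0 := by simpa using h0
    have hle := two_mul_grid_index_add_one_le hj hk
    refine ⟨2 * ((r + 1) / 2 + (r + 1) * ((q + 1) / 2)), Finset.mem_Icc.2 ⟨by omega, by omega⟩, ?_⟩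
    rw [h.morse_even hj hk h0, evenMorse]
    omega

theorem isGreatest_morseCount_ne_zero (h : SigmaRQ r q σ) :
    IsGreatest {i : ℕ | morseCount (2 * (r + 1) * (q + 1) - 1) σ i ≠ 0} (r + q) := by
  refine ⟨morseCount_ne_zero_iff.2 h.exists_morse_eq_add, fun i hi ↦ ?_⟩
  obtain ⟨n, hn, hni⟩ := morseCount_ne_zero_iff.1 hi
  exact_mod_cast hni ▸ (Finset.mem_Icc.1 (h.morse_mem_Icc hn)).2

theorem sum_morseCount (h : SigmaRQ r q σ) :
    ∑ i ∈ Finset.Icc (0 : ℤ) (r + q : ℕ), morseCount (2 * (r + 1) * (q + 1) - 1) σ i =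
      2 * (r + 1) * (q + 1) - 1 :=
  sum_morseCount_eq fun _ ↦ h.morse_mem_Icc

end SigmaRQ

/-- the Morse count function determines the subscript set `{r,q}`. -/
theorem stmt_4 (r q r' q' : ℕ) (hr : 1 ≤ r) (hq : 1 ≤ q)
    (hr' : 1 ≤ r') (hq' : 1 ≤ q') (hrq : 1 < r*q) (hrq' : 1 < r'*q')
    (σ σ' : Equiv.Perm ℕ) (hσ : SigmaRQ r q σ) (hσ' : SigmaRQ r' q' σ')
    (hμ : ∀ i : ℕ, morseCount (2*(r+1)*(q+1)-1) σ i
      = morseCount (2*(r'+1)*(q'+1)-1) σ' i) :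
    (r = r' ∧ q = q') ∨ (r = q' ∧ q = r') := by
  have hsum : r + q = r' + q' := by
    have hgreatest := hσ.isGreatest_morseCount_ne_zero
    simp only [hμ] at hgreatest
    exact hgreatest.unique hσ'.isGreatest_morseCount_ne_zero
  have hN : 2 * (r + 1) * (q + 1) - 1 = 2 * (r' + 1) * (q' + 1) - 1 := by
    rw [← hσ.sum_morseCount, ← hσ'.sum_morseCount, hsum]
    refine Finset.sum_congr rfl fun i hi ↦ ?_
    lift i to ℕ using (Finset.mem_Icc.1 hi).1
    exact hμ i
  have hmul : r * q = r' * q' := by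
    have hexpand (a b : ℕ) : 2 * (a + 1) * (b + 1) = 2 * (a * b) + 2 * (a + b) + 2 := by ring
    rw [hexpand, hexpand] at hN
    omega
  zify at hsum hmul ⊢
  exact eq_and_eq_or_eq_and_eq_of_add_eq_of_mul_eq hsum hmul
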